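/- (Proposition 2.2(c)) Let f be an entire function that is real-valued on ℝ, with f(0) = 1 and ∫_ℝ f(x)² dx ≤ 1, and suppose that for every δ > 0 there is C_δ with |f(z)| ≤ C_δ exp((π + δ)|Im z|) for all z ∈ ℂ. Then f(z) = sin(πz)/(πz) for all z ∈ ℂ (with value 1 at z = 0). -/

import Mathlib

open MeasureTheory

/-!
Let `s x = sin (σ x) / (σ x)`. Every entire `f` of exponential type at most `σ` that is
square-integrable on `ℝ` satisfies the reproducing formula `∫ f s = (π / σ) f 0`. Applied to `s`
itself it gives `∫ s² = π / σ`, and expanding the square gives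
`∫ |f - f 0 • s|² = ∫ |f|² - (π / σ) |f 0|²`. If the right-hand side is not positive, then
`f = f 0 • s` on `ℝ`, hence on `ℂ`.

For the reproducing formula, write the sine as a difference of exponentials: the `exp (i μ x)` half
of the integral is evaluated by moving the contour into the upper half-plane, and the
`exp (-i μ x)` half is of the same form after `x ↦ -x`. The factor `1 / (1 - i ε x)` makes the
integrands `O(|z|⁻²)` there, and subtracting the value at `0` makes them holomorphic; the subtracted
terms add up to the Cauchy density `ε / (1 + ε² x²)`, of total mass `π`. Then `μ ↓ σ`, `ε ↓ 0`.
-/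

open Complex Filter Topology
open scoped Real ComplexConjugate

section UpperHalfPlane

variable {E : Type*} [NormedAddCommGroup E]

lemma integrable_of_sq_mul_norm_le {g : ℝ → E} {K : ℝ} (hg : Continuous g)
    (hK : ∀ x, x ^ 2 * ‖g x‖ ≤ K) : Integrable g := by
  refine (hg.locallyIntegrable (μ := volume)).integrable_of_isBigO_cocompact
    (Asymptotics.IsBigO.of_bound (2 * K) ?_) (integrable_inv_one_add_sq.integrableAtFilter _)
  filter_upwards [(tendsto_norm_cocompact_atTop (E := ℝ)).eventually_ge_atTop 1] with x hx
  have hx2 : 1 ≤ x ^ 2 := by simpa using one_le_pow₀ hx (n := 2)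
  rw [Real.norm_of_nonneg (by positivity), ← div_eq_mul_inv, le_div_iff₀ (by positivity)]
  nlinarith [hK x, norm_nonneg (g x)]

variable [NormedSpace ℂ E] {q : ℂ → E} {K : ℝ}

lemma norm_integral_le_of_sq_mul_norm_le_upperHalfPlane
    (hq : DifferentiableOn ℂ q {z | 0 ≤ z.im}) (hK : ∀ z : ℂ, 0 ≤ z.im → ‖z‖ ^ 2 * ‖q z‖ ≤ K)
    {R : ℝ} (hR : 0 < R) : ‖∫ x in (-R)..R, q x‖ ≤ 4 * K / R := by
  have hfar {z : ℂ} (hz : 0 ≤ z.im) (hRz : R ≤ ‖z‖) : ‖q z‖ ≤ K / R ^ 2 := by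
    rw [le_div_iff₀' (by positivity)]
    exact le_trans (by gcongr) (hK z hz)
  have htop : ‖∫ x in (-R)..R, q (x + R * I)‖ ≤ K / R ^ 2 * |R - -R| := by
    refine intervalIntegral.norm_integral_le_of_norm_le_const fun x _ => hfar (by simp [hR.le]) ?_
    simpa [abs_of_pos hR] using abs_im_le_norm (x + R * I)
  have hside (s : ℝ) (hs : |s| = R) : ‖∫ y in (0 : ℝ)..R, q (s + y * I)‖ ≤ K / R ^ 2 * |R - 0| := by
    refine intervalIntegral.norm_integral_le_of_norm_le_const fun y hy => ?_
    rw [Set.uIoc_of_le hR.le] at hy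
    refine hfar (by simpa using hy.1.le) ?_
    simpa [hs] using abs_re_le_norm (s + y * I)
  have hright := hside R (abs_of_pos hR)
  have hleft := hside (-R) (by rw [abs_neg, abs_of_pos hR])
  have hrect := integral_boundary_rect_eq_zero_of_differentiableOn q (-R : ℝ) (R + R * I)
    (hq.mono fun z hz => by
      have him : z.im ∈ Set.uIcc 0 R := by simpa using hz.2
      exact (Set.uIcc_of_le hR.le ▸ him).1)
  simp only [ofReal_re, add_re, mul_re, I_re, mul_zero, ofReal_im, I_im, mul_one, sub_self,
    add_zero, ofReal_zero, zero_mul, add_im, mul_im, zero_add] at hrect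
  have hbottom : ∫ x in (-R)..R, q x = (∫ x in (-R)..R, q (x + R * I))
      - I • (∫ y in (0 : ℝ)..R, q (R + y * I))
      + I • ∫ y in (0 : ℝ)..R, q ((-R : ℝ) + y * I) := by
    rw [← sub_eq_zero, ← hrect]
    abel
  calc ‖∫ x in (-R)..R, q x‖
      ≤ ‖∫ x in (-R)..R, q (x + R * I)‖ + ‖I • ∫ y in (0 : ℝ)..R, q (R + y * I)‖
        + ‖I • ∫ y in (0 : ℝ)..R, q ((-R : ℝ) + y * I)‖ := by
        rw [hbottom]
        exact (norm_add_le _ _).trans (by gcongr; exact norm_sub_le _ _)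
    _ ≤ K / R ^ 2 * |R - -R| + K / R ^ 2 * |R - 0| + K / R ^ 2 * |R - 0| := by
        rw [norm_smul, norm_smul, norm_I, one_mul, one_mul]
        gcongr
    _ = 4 * K / R := by
        rw [sub_zero, sub_neg_eq_add, abs_of_pos hR, abs_of_pos (by positivity)]
        field_simp
        ring

lemma integrable_of_sq_mul_norm_le_upperHalfPlane
    (hq : DifferentiableOn ℂ q {z | 0 ≤ z.im}) (hK : ∀ z : ℂ, 0 ≤ z.im → ‖z‖ ^ 2 * ‖q z‖ ≤ K) :
    Integrable fun x : ℝ => q x :=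
  integrable_of_sq_mul_norm_le
    (hq.continuousOn.comp_continuous continuous_ofReal fun _ => by simp)
    fun x => by simpa using hK x (by simp)

theorem integral_eq_zero_of_sq_mul_norm_le_upperHalfPlane
    (hq : DifferentiableOn ℂ q {z | 0 ≤ z.im}) (hK : ∀ z : ℂ, 0 ≤ z.im → ‖z‖ ^ 2 * ‖q z‖ ≤ K) :
    ∫ x : ℝ, q x = 0 := by
  refine tendsto_nhds_unique (intervalIntegral_tendsto_integral
    (integrable_of_sq_mul_norm_le_upperHalfPlane hq hK) tendsto_neg_atTop_atBot tendsto_id) ?_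
  refine squeeze_zero_norm' ?_ (tendsto_const_nhds (x := 4 * K).div_atTop tendsto_id)
  filter_upwards [eventually_gt_atTop 0] with R hR
  exact norm_integral_le_of_sq_mul_norm_le_upperHalfPlane hq hK hR

end UpperHalfPlane

section DampedSlope

/-- The difference quotient `(G z - G 0) / z` damped by the Cauchy factor `1 / (1 - i ε z)`. For
`ε > 0` the only pole of the factor is `-i / ε`, so the product stays holomorphic in the upper
half-plane, and it is `O(|z|⁻²)` there as soon as `G` is bounded. -/
noncomputable def dampedSlope (ε : ℝ) (G : ℂ → ℂ) (z : ℂ) : ℂ :=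
  dslope G 0 z / (1 - I * ε * z)

variable {G : ℂ → ℂ} {ε C : ℝ}

lemma mul_norm_le_norm_one_sub_I_mul {z : ℂ} (hε : 0 ≤ ε) (hz : 0 ≤ z.im) :
    ε * ‖z‖ ≤ ‖1 - I * ε * z‖ := by
  have h : ‖(ε : ℂ) * z‖ ≤ ‖1 - I * ε * z‖ := by
    rw [norm_def, norm_def]
    apply Real.sqrt_le_sqrt
    simp only [normSq_apply, sub_re, sub_im, mul_re, mul_im, one_re, one_im, I_re, I_im, ofReal_re,
      ofReal_im]
    nlinarith [mul_nonneg hε hz]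
  rwa [norm_mul, norm_real, Real.norm_of_nonneg hε] at h

lemma differentiableOn_dampedSlope (hG : Differentiable ℂ G) (hε : 0 ≤ ε) :
    DifferentiableOn ℂ (dampedSlope ε G) {z | 0 ≤ z.im} := by
  have hslope : Differentiable ℂ (dslope G 0) := by
    rw [← differentiableOn_univ, differentiableOn_dslope univ_mem]
    exact hG.differentiableOn
  refine hslope.differentiableOn.div (by fun_prop) fun z hz h0 => ?_
  have hre : 1 + ε * z.im = 0 := by simpa using congrArg re h0
  linarith [mul_nonneg hε hz]

lemma sq_mul_norm_dampedSlope_le (hε : 0 < ε) (hC : ∀ z : ℂ, 0 ≤ z.im → ‖G z‖ ≤ C) {z : ℂ}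
    (hz : 0 ≤ z.im) : ‖z‖ ^ 2 * ‖dampedSlope ε G z‖ ≤ 2 * C / ε := by
  have hC0 : 0 ≤ C := (norm_nonneg _).trans (hC z hz)
  rcases eq_or_ne z 0 with rfl | hz0
  · simpa using show 0 ≤ 2 * C / ε by positivity
  have hdiff : ‖G z - G 0‖ ≤ 2 * C :=
    (norm_sub_le _ _).trans (by linarith [hC z hz, hC 0 le_rfl])
  have hdslope : dslope G 0 z = (G z - G 0) / z := by
    rw [dslope_of_ne _ hz0, slope_def_field, sub_zero]
  calc ‖z‖ ^ 2 * ‖dampedSlope ε G z‖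
      = ‖z‖ ^ 2 * (‖G z - G 0‖ / ‖z‖ / ‖1 - I * ε * z‖) := by
        rw [dampedSlope, hdslope, norm_div, norm_div]
    _ ≤ ‖z‖ ^ 2 * (2 * C / ‖z‖ / (ε * ‖z‖)) := by
        gcongr
        exact mul_norm_le_norm_one_sub_I_mul hε.le hz
    _ = 2 * C / ε := by field_simp

lemma integrable_dampedSlope (hG : Differentiable ℂ G) (hε : 0 < ε)
    (hC : ∀ z : ℂ, 0 ≤ z.im → ‖G z‖ ≤ C) : Integrable fun x : ℝ => dampedSlope ε G x :=
  integrable_of_sq_mul_norm_le_upperHalfPlane (differentiableOn_dampedSlope hG hε.le)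
    fun _ => sq_mul_norm_dampedSlope_le hε hC

lemma integral_dampedSlope (hG : Differentiable ℂ G) (hε : 0 < ε)
    (hC : ∀ z : ℂ, 0 ≤ z.im → ‖G z‖ ≤ C) : ∫ x : ℝ, dampedSlope ε G x = 0 :=
  integral_eq_zero_of_sq_mul_norm_le_upperHalfPlane (differentiableOn_dampedSlope hG hε.le)
    fun _ => sq_mul_norm_dampedSlope_le hε hC

end DampedSlope

section DampedSincKernel

/-- The kernel `Im (exp (i μ x) / (1 - i ε x)) / x`, written with `Real.sinc` to remove the
singularity at `x = 0`. At `ε = 0` it is the kernel `sin (μ x) / x` of the reproducing formula, of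
which `ε > 0` gives a regularization. -/
noncomputable def dampedSincKernel (μ ε x : ℝ) : ℝ :=
  (μ * Real.sinc (μ * x) + ε * Real.cos (μ * x)) / (1 + (ε * x) ^ 2)

lemma dampedSincKernel_zero (μ x : ℝ) : dampedSincKernel μ 0 x = μ * Real.sinc (μ * x) := by
  simp [dampedSincKernel]

lemma mul_sinc (x : ℝ) : x * Real.sinc x = Real.sin x := by
  rcases eq_or_ne x 0 with rfl | hx
  · simp
  · rw [Real.sinc_of_ne_zero hx, mul_div_cancel₀ _ hx]

lemma mul_dampedSincKernel (μ ε x : ℝ) : x * dampedSincKernel μ ε x =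
    (Real.sin (μ * x) + ε * x * Real.cos (μ * x)) / (1 + (ε * x) ^ 2) := by
  rw [dampedSincKernel, ← mul_sinc (μ * x)]
  ring

lemma continuous_dampedSincKernel :
    Continuous fun p : ℝ × ℝ × ℝ => dampedSincKernel p.1 p.2.1 p.2.2 := by
  unfold dampedSincKernel
  have := Real.continuous_sinc
  exact Continuous.div (by fun_prop) (by fun_prop) fun p => by positivity

lemma sq_dampedSincKernel_le {μ ε M : ℝ} (hM : |μ| + |ε| ≤ M) (x : ℝ) :
    dampedSincKernel μ ε x ^ 2 ≤ (M ^ 2 + 4) * (1 + x ^ 2)⁻¹ := by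
  have hK : |dampedSincKernel μ ε x| ≤ M := by
    rw [dampedSincKernel, abs_div, abs_of_pos (by positivity : 0 < 1 + (ε * x) ^ 2)]
    refine (div_le_self (abs_nonneg _) (by nlinarith [sq_nonneg (ε * x)])).trans
      ((abs_add_le _ _).trans (le_trans ?_ hM))
    rw [abs_mul, abs_mul]
    gcongr
    · exact mul_le_of_le_one_right (abs_nonneg _) (Real.abs_sinc_le_one _)
    · exact mul_le_of_le_one_right (abs_nonneg _) (Real.abs_cos_le_one _)
  have hxK : |x * dampedSincKernel μ ε x| ≤ 2 := by
    rw [mul_dampedSincKernel, abs_div, abs_of_pos (by positivity : 0 < 1 + (ε * x) ^ 2),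
      div_le_iff₀ (by positivity)]
    have hcos : |ε * x * Real.cos (μ * x)| ≤ |ε * x| := by
      rw [abs_mul]
      exact mul_le_of_le_one_right (abs_nonneg _) (Real.abs_cos_le_one _)
    nlinarith [abs_add_le (Real.sin (μ * x)) (ε * x * Real.cos (μ * x)),
      Real.abs_sin_le_one (μ * x), sq_abs (ε * x), sq_nonneg (|ε * x| - 1)]
  rw [← div_eq_mul_inv, le_div_iff₀ (by positivity)]
  have hK2 := sq_le_sq' (abs_le.1 hK).1 (abs_le.1 hK).2
  have hxK2 := sq_le_sq' (abs_le.1 hxK).1 (abs_le.1 hxK).2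
  linarith

lemma dampedSlope_add_dampedSlope_neg (f : ℂ → ℂ) (μ ε : ℝ) {x : ℝ} (hx : x ≠ 0) :
    dampedSlope ε (fun z => f z * exp (I * μ * z)) x
      + dampedSlope ε (fun z => f (-z) * exp (I * μ * z)) (-x : ℝ) =
    2 * I * (f x * dampedSincKernel μ ε x - f 0 * (ε * (1 + (ε * x) ^ 2)⁻¹ : ℝ)) := by
  have hx' : (x : ℂ) ≠ 0 := ofReal_ne_zero.2 hx
  have hnx : ((-x : ℝ) : ℂ) ≠ 0 := ofReal_ne_zero.2 (neg_ne_zero.2 hx)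
  have hsub : (1 - I * ε * x : ℂ) ≠ 0 := fun h => by simpa using congrArg re h
  have hadd : (1 + I * ε * x : ℂ) ≠ 0 := fun h => by simpa using congrArg re h
  have hsq : (1 + (ε * x) ^ 2 : ℂ) = (1 - I * ε * x) * (1 + I * ε * x) := by
    linear_combination ((ε : ℂ) * x) ^ 2 * I_sq
  have hexp : exp (I * μ * x) = cos (μ * x) + sin (μ * x) * I := by
    rw [← exp_mul_I]; ring_nf
  have hexp_neg : exp (I * μ * -x) = cos (μ * x) - sin (μ * x) * I := by
    rw [show I * μ * -x = -(μ * x) * I by ring, exp_mul_I, cos_neg, sin_neg]; ring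
  have hkernel : (dampedSincKernel μ ε x : ℂ) =
      (sin (μ * x) + ε * x * cos (μ * x)) / ((1 - I * ε * x) * (1 + I * ε * x)) / x := by
    rw [eq_div_iff hx', mul_comm, ← ofReal_mul, mul_dampedSincKernel, ← hsq]
    push_cast
    rfl
  rw [dampedSlope, dampedSlope, dslope_of_ne _ hx', dslope_of_ne _ hnx, slope_def_field,
    slope_def_field, hkernel]
  push_cast
  rw [hexp, hexp_neg, hsq]
  simp only [neg_neg, neg_zero, mul_neg, sub_neg_eq_add, mul_zero, exp_zero, mul_one, sub_zero]
  generalize ha : I * ε * x = a at hsub hadd ⊢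
  field_simp
  linear_combination (2 * f 0 - 2 * f x * cos (μ * x)) * ha

lemma integral_mul_inv_one_add_mul_sq {ε : ℝ} (hε : 0 < ε) :
    ∫ x : ℝ, ε * (1 + (ε * x) ^ 2)⁻¹ = π := by
  rw [integral_const_mul, Measure.integral_comp_mul_left (fun x : ℝ => (1 + x ^ 2)⁻¹),
    integral_univ_inv_one_add_sq, abs_of_pos (inv_pos.2 hε), smul_eq_mul,
    mul_inv_cancel_left₀ hε.ne']

lemma norm_mul_exp_I_mul_le {f : ℂ → ℂ} {C μ : ℝ}
    (hf : ∀ z : ℂ, ‖f z‖ ≤ C * Real.exp (μ * |z.im|)) {z : ℂ} (hz : 0 ≤ z.im) :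
    ‖f z * exp (I * μ * z)‖ ≤ C := by
  have hexp : ‖exp (I * μ * z)‖ = Real.exp (-(μ * z.im)) := by
    rw [norm_exp]
    simp
  calc ‖f z * exp (I * μ * z)‖ ≤ C * Real.exp (μ * |z.im|) * Real.exp (-(μ * z.im)) := by
        rw [norm_mul, hexp]
        gcongr
        exact hf z
    _ = C := by rw [abs_of_nonneg hz, mul_assoc, ← Real.exp_add, add_neg_cancel, Real.exp_zero,
        mul_one]

theorem integral_mul_dampedSincKernel {f : ℂ → ℂ} (hf : Differentiable ℂ f) {C μ ε : ℝ}
    (hε : 0 < ε) (hC : ∀ z : ℂ, ‖f z‖ ≤ C * Real.exp (μ * |z.im|)) :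
    ∫ x : ℝ, f x * dampedSincKernel μ ε x = π * f 0 := by
  let Gpos : ℂ → ℂ := fun z => f z * exp (I * μ * z)
  let Gneg : ℂ → ℂ := fun z => f (-z) * exp (I * μ * z)
  have hGpos : Differentiable ℂ Gpos := by fun_prop
  have hGneg : Differentiable ℂ Gneg := by fun_prop
  have hposC : ∀ z : ℂ, 0 ≤ z.im → ‖Gpos z‖ ≤ C := fun _ => norm_mul_exp_I_mul_le hC
  have hnegC : ∀ z : ℂ, 0 ≤ z.im → ‖Gneg z‖ ≤ C := fun _ =>
    norm_mul_exp_I_mul_le (f := fun z => f (-z)) fun z => by simpa using hC (-z)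
  have hipos := integrable_dampedSlope hGpos hε hposC
  have hineg := (integrable_dampedSlope hGneg hε hnegC).comp_neg
  have hicauchy : Integrable fun x : ℝ => f 0 * ((ε * (1 + (ε * x) ^ 2)⁻¹ : ℝ) : ℂ) :=
    ((integrable_inv_one_add_sq.comp_mul_left' hε.ne').const_mul ε).ofReal.const_mul _
  have hsplit : (fun x : ℝ => f x * dampedSincKernel μ ε x) =ᵐ[volume] fun x : ℝ =>
      (2 * I)⁻¹ * (dampedSlope ε Gpos x + dampedSlope ε Gneg (-x : ℝ))
        + f 0 * (ε * (1 + (ε * x) ^ 2)⁻¹ : ℝ) := by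
    filter_upwards [Measure.ae_ne volume (0 : ℝ)] with x hx
    rw [dampedSlope_add_dampedSlope_neg f μ ε hx, inv_mul_cancel_left₀ (by simp)]
    ring
  rw [integral_congr_ae hsplit, integral_add (by exact (hipos.add hineg).const_mul _) hicauchy,
    integral_const_mul, integral_add hipos hineg, integral_neg_eq_self
      (fun x : ℝ => dampedSlope ε Gneg x), integral_dampedSlope hGpos hε hposC,
    integral_dampedSlope hGneg hε hnegC, integral_const_mul, integral_complex_ofReal,
    integral_mul_inv_one_add_mul_sq hε]
  ring

end DampedSincKernel

lemma eq_of_forall_ofReal_eq {E : Type*} [NormedAddCommGroup E] [NormedSpace ℂ E]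
    [CompleteSpace E] {f g : ℂ → E} (hf : Differentiable ℂ f) (hg : Differentiable ℂ g)
    (h : ∀ x : ℝ, f x = g x) : f = g := by
  have hpunctured : Tendsto ((↑) : ℝ → ℂ) (𝓝[≠] 0) (𝓝[≠] 0) := by
    simpa using continuous_ofReal.continuousWithinAt.tendsto_nhdsWithin (x := 0) (s := {0}ᶜ)
      (t := {0}ᶜ) fun x hx => by simpa using hx
  exact AnalyticOnNhd.eq_of_frequently_eq (fun z _ => hf.analyticAt z) (fun z _ => hg.analyticAt z)
    (hpunctured.frequently (Frequently.of_forall h))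

section ComplexSinc

/-- The entire extension of `Real.sinc`, that is `sin z / z` with value `1` at `0`. -/
noncomputable def complexSinc : ℂ → ℂ := dslope sin 0

lemma complexSinc_zero : complexSinc 0 = 1 := by
  rw [complexSinc, dslope_same, Complex.deriv_sin, cos_zero]

lemma complexSinc_of_ne_zero {z : ℂ} (hz : z ≠ 0) : complexSinc z = sin z / z := by
  rw [complexSinc, dslope_of_ne _ hz, slope_def_field, sin_zero, sub_zero, sub_zero]

lemma complexSinc_apply (z : ℂ) : complexSinc z = if z = 0 then 1 else sin z / z := by
  split_ifs with hz
  · rw [hz, complexSinc_zero]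
  · exact complexSinc_of_ne_zero hz

lemma complexSinc_ofReal (x : ℝ) : complexSinc x = Real.sinc x := by
  rcases eq_or_ne x 0 with rfl | hx
  · rw [ofReal_zero, complexSinc_zero, Real.sinc_zero, ofReal_one]
  · rw [complexSinc_of_ne_zero (ofReal_ne_zero.2 hx), Real.sinc_of_ne_zero hx, ofReal_div,
      ofReal_sin]

lemma differentiable_complexSinc : Differentiable ℂ complexSinc := by
  rw [← differentiableOn_univ, complexSinc, differentiableOn_dslope univ_mem]
  exact differentiable_sin.differentiableOn

lemma norm_cos_le_exp_abs_im (z : ℂ) : ‖cos z‖ ≤ Real.exp |z.im| := by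
  have hpos : ‖exp (z * I)‖ ≤ Real.exp |z.im| := by
    rw [norm_exp]
    simpa using neg_le_abs z.im
  have hneg : ‖exp (-z * I)‖ ≤ Real.exp |z.im| := by
    rw [norm_exp]
    simpa using le_abs_self z.im
  rw [cos, norm_div, norm_ofNat]
  linarith [norm_add_le (exp (z * I)) (exp (-z * I))]

lemma norm_complexSinc_le_exp_abs_im (z : ℂ) : ‖complexSinc z‖ ≤ Real.exp |z.im| := by
  rcases eq_or_ne z 0 with rfl | hz
  · simp [complexSinc_zero]
  have hmvt : ‖sin z - sin 0‖ ≤ Real.exp |z.im| * ‖z - 0‖ := by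
    refine (convex_segment (0 : ℂ) z).norm_image_sub_le_of_norm_deriv_le
      (fun _ _ => differentiableAt_sin) ?_ (left_mem_segment ℝ _ _) (right_mem_segment ℝ _ _)
    intro w hw
    rw [segment_eq_image'] at hw
    obtain ⟨t, ⟨ht0, ht1⟩, rfl⟩ := hw
    rw [Complex.deriv_sin]
    refine (norm_cos_le_exp_abs_im _).trans (Real.exp_le_exp.2 ?_)
    simpa [abs_mul, abs_of_nonneg ht0] using mul_le_of_le_one_left (abs_nonneg z.im) ht1
  rw [complexSinc_of_ne_zero hz, norm_div, div_le_iff₀ (norm_pos_iff.2 hz)]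
  simpa using hmvt

lemma integrable_sinc_sq : Integrable fun x : ℝ => Real.sinc x ^ 2 := by
  refine integrable_of_sq_mul_norm_le (K := 1) (Real.continuous_sinc.pow 2) fun x => ?_
  rw [Real.norm_of_nonneg (sq_nonneg _), ← mul_pow, mul_sinc]
  exact Real.sin_sq_le_one x

lemma memLp_two_sinc_mul {σ : ℝ} (hσ : σ ≠ 0) :
    MemLp (fun x : ℝ => (Real.sinc (σ * x) : ℂ)) 2 :=
  ((memLp_two_iff_integrable_sq
    (Real.continuous_sinc.comp (continuous_const_mul σ)).aestronglyMeasurable).2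
    (integrable_sinc_sq.comp_mul_left' hσ)).ofReal

end ComplexSinc

/-- The Paley–Wiener space of bandwidth `σ`: the entire functions of exponential type at most `σ`
that are square-integrable on `ℝ`. The type is measured by `|Im z|`, so that the growth bound also
makes `f` bounded on `ℝ`. -/
structure IsPaleyWiener (σ : ℝ) (f : ℂ → ℂ) : Prop where
  differentiable : Differentiable ℂ f
  integrable_sq : Integrable fun x : ℝ => ‖f x‖ ^ 2
  exists_norm_le : ∀ δ : ℝ, 0 < δ → ∃ C : ℝ, ∀ z : ℂ, ‖f z‖ ≤ C * Real.exp ((σ + δ) * |z.im|)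

lemma isPaleyWiener_complexSinc : IsPaleyWiener 1 complexSinc where
  differentiable := differentiable_complexSinc
  integrable_sq := by
    simpa only [complexSinc_ofReal, norm_real, Real.norm_eq_abs, sq_abs] using integrable_sinc_sq
  exists_norm_le δ hδ := ⟨1, fun z => by
    rw [one_mul]
    refine (norm_complexSinc_le_exp_abs_im z).trans (Real.exp_le_exp.2 ?_)
    exact le_mul_of_one_le_left (abs_nonneg _) (by linarith)⟩

lemma norm_mul_dampedSincKernel_le (f : ℝ → ℂ) {μ ε M : ℝ} (hM : |μ| + |ε| ≤ M) (x : ℝ) :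
    ‖f x * dampedSincKernel μ ε x‖ ≤ ‖f x‖ ^ 2 + (M ^ 2 + 4) * (1 + x ^ 2)⁻¹ := by
  have hK := sq_dampedSincKernel_le hM x
  rw [norm_mul, norm_real, Real.norm_eq_abs]
  rw [← sq_abs] at hK
  nlinarith [sq_nonneg (‖f x‖ - |dampedSincKernel μ ε x|), sq_nonneg (‖f x‖),
    sq_nonneg (|dampedSincKernel μ ε x|)]

namespace IsPaleyWiener

variable {σ : ℝ} {f : ℂ → ℂ}

lemma continuous_comp_ofReal (h : IsPaleyWiener σ f) : Continuous fun x : ℝ => f x :=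
  h.differentiable.continuous.comp continuous_ofReal

lemma memLp_two (h : IsPaleyWiener σ f) : MemLp (fun x : ℝ => f x) 2 :=
  (memLp_two_iff_integrable_sq_norm h.continuous_comp_ofReal.aestronglyMeasurable).2 h.integrable_sq

lemma tendsto_integral_mul_dampedSincKernel (h : IsPaleyWiener σ f) :
    Tendsto (fun δ : ℝ => ∫ x : ℝ, f x * dampedSincKernel (σ + δ) δ x) (𝓝[>] 0)
      (𝓝 (∫ x : ℝ, f x * dampedSincKernel σ 0 x)) := by
  have hf := h.continuous_comp_ofReal
  have hK := continuous_dampedSincKernel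
  refine tendsto_integral_filter_of_dominated_convergence
    (fun x => ‖f x‖ ^ 2 + ((|σ| + 2) ^ 2 + 4) * (1 + x ^ 2)⁻¹)
    (Eventually.of_forall fun δ => ?_) ?_
    (h.integrable_sq.add (integrable_inv_one_add_sq.const_mul _))
    (Eventually.of_forall fun x => ?_)
  · have : Continuous fun x => dampedSincKernel (σ + δ) δ x :=
      hK.comp (by fun_prop : Continuous fun x : ℝ => (σ + δ, δ, x))
    exact (hf.mul (continuous_ofReal.comp this)).aestronglyMeasurable
  · filter_upwards [Ioo_mem_nhdsGT zero_lt_one] with δ ⟨hδ0, hδ1⟩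
    refine Eventually.of_forall (norm_mul_dampedSincKernel_le (fun x : ℝ => f x) ?_)
    linarith [abs_add_le σ δ, abs_of_pos hδ0]
  · have : Continuous fun δ => dampedSincKernel (σ + δ) δ x :=
      hK.comp (by fun_prop : Continuous fun δ : ℝ => (σ + δ, δ, x))
    have hδ : Continuous fun δ : ℝ => f x * dampedSincKernel (σ + δ) δ x := by fun_prop
    simpa using (hδ.tendsto 0).mono_left nhdsWithin_le_nhds

theorem integral_mul_sinc (h : IsPaleyWiener σ f) (hσ : σ ≠ 0) :
    ∫ x : ℝ, f x * Real.sinc (σ * x) = π / σ * f 0 := by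
  have hlim : ∫ x : ℝ, f x * dampedSincKernel σ 0 x = π * f 0 := by
    refine tendsto_nhds_unique h.tendsto_integral_mul_dampedSincKernel
      (tendsto_const_nhds.congr' ?_)
    filter_upwards [self_mem_nhdsWithin] with δ hδ
    obtain ⟨C, hC⟩ := h.exists_norm_le δ hδ
    exact (integral_mul_dampedSincKernel h.differentiable hδ hC).symm
  have hscale : ∫ x : ℝ, f x * dampedSincKernel σ 0 x = σ * ∫ x : ℝ, f x * Real.sinc (σ * x) := by
    simp_rw [← integral_const_mul, dampedSincKernel_zero, ofReal_mul, mul_left_comm]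
  rw [div_mul_eq_mul_div, eq_div_iff (ofReal_ne_zero.2 hσ), mul_comm, ← hscale, hlim]

end IsPaleyWiener

theorem integral_sinc_sq : ∫ x : ℝ, Real.sinc x ^ 2 = π := by
  have h := isPaleyWiener_complexSinc.integral_mul_sinc one_ne_zero
  simp_rw [one_mul, complexSinc_ofReal, complexSinc_zero, ofReal_one, div_one, mul_one,
    ← ofReal_mul, ← sq, integral_complex_ofReal] at h
  exact ofReal_injective h

namespace IsPaleyWiener

variable {σ : ℝ} {f : ℂ → ℂ}

lemma integrable_mul_sinc (h : IsPaleyWiener σ f) (hσ : σ ≠ 0) :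
    Integrable fun x : ℝ => f x * Real.sinc (σ * x) :=
  h.memLp_two.integrable_mul (memLp_two_sinc_mul hσ)

theorem integral_norm_sub_mul_sinc_sq (h : IsPaleyWiener σ f) (hσ : 0 < σ) :
    ∫ x : ℝ, ‖f x - f 0 * Real.sinc (σ * x)‖ ^ 2 = (∫ x : ℝ, ‖f x‖ ^ 2) - π / σ * ‖f 0‖ ^ 2 := by
  have hicross : Integrable fun x : ℝ => conj (f 0) * (f x * Real.sinc (σ * x)) :=
    (h.integrable_mul_sinc hσ.ne').const_mul _
  have hisinc : Integrable fun x : ℝ => ‖f 0‖ ^ 2 * Real.sinc (σ * x) ^ 2 :=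
    (integrable_sinc_sq.comp_mul_left' hσ.ne').const_mul _
  have hexpand (x : ℝ) : ‖f x - f 0 * Real.sinc (σ * x)‖ ^ 2 = ‖f x‖ ^ 2
      - 2 * (conj (f 0) * (f x * Real.sinc (σ * x))).re + ‖f 0‖ ^ 2 * Real.sinc (σ * x) ^ 2 := by
    simp only [Complex.sq_norm, normSq_sub, normSq_ofReal, map_mul, conj_ofReal]
    ring_nf
  have hcross : ∫ x : ℝ, (conj (f 0) * (f x * Real.sinc (σ * x))).re = π / σ * ‖f 0‖ ^ 2 := by
    calc ∫ x : ℝ, (conj (f 0) * (f x * Real.sinc (σ * x))).re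
        = (conj (f 0) * (π / σ * f 0)).re := by
          rw [← h.integral_mul_sinc hσ.ne', ← integral_const_mul]
          exact integral_re hicross
      _ = ((π / σ * ‖f 0‖ ^ 2 : ℝ) : ℂ).re := by
          rw [mul_left_comm, ← normSq_eq_conj_mul_self, ← Complex.sq_norm]
          push_cast
          rfl
      _ = π / σ * ‖f 0‖ ^ 2 := ofReal_re _
  have hsinc : ∫ x : ℝ, Real.sinc (σ * x) ^ 2 = π / σ := by
    rw [Measure.integral_comp_mul_left (fun x => Real.sinc x ^ 2), integral_sinc_sq,
      abs_of_pos (inv_pos.2 hσ), smul_eq_mul, inv_mul_eq_div]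
  have hire : Integrable fun x : ℝ => 2 * (conj (f 0) * (f x * Real.sinc (σ * x))).re :=
    hicross.re.const_mul 2
  simp_rw [hexpand]
  rw [integral_add (by exact h.integrable_sq.sub hire) hisinc, integral_sub h.integrable_sq hire,
    integral_const_mul, integral_const_mul, hcross, hsinc]
  ring

lemma eq_mul_sinc_ofReal (h : IsPaleyWiener σ f) (hσ : 0 < σ)
    (hL2 : ∫ x : ℝ, ‖f x‖ ^ 2 ≤ π / σ * ‖f 0‖ ^ 2) (x : ℝ) :
    f x = f 0 * Real.sinc (σ * x) := by
  have hdist : ∫ x : ℝ, ‖f x - f 0 * Real.sinc (σ * x)‖ ^ 2 = 0 := by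
    refine le_antisymm ?_ (integral_nonneg fun x => by positivity)
    rw [h.integral_norm_sub_mul_sinc_sq hσ]
    linarith
  have hidist : Integrable fun x : ℝ => ‖f x - f 0 * Real.sinc (σ * x)‖ ^ 2 :=
    (h.memLp_two.sub ((memLp_two_sinc_mul hσ.ne').const_mul (f 0))).integrable_norm_pow two_ne_zero
  have hae : (fun x : ℝ => f x) =ᵐ[volume] fun x : ℝ => f 0 * Real.sinc (σ * x) := by
    filter_upwards [(integral_eq_zero_iff_of_nonneg (fun x => by positivity) hidist).1 hdist]
      with x hx
    simpa [sub_eq_zero] using hx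
  have hsinc : Continuous fun x : ℝ => f 0 * (Real.sinc (σ * x) : ℂ) := by
    have := Real.continuous_sinc
    fun_prop
  exact congrFun ((h.continuous_comp_ofReal.ae_eq_iff_eq volume hsinc).1 hae) x

theorem eq_mul_complexSinc (h : IsPaleyWiener σ f) (hσ : 0 < σ)
    (hL2 : ∫ x : ℝ, ‖f x‖ ^ 2 ≤ π / σ * ‖f 0‖ ^ 2) (w : ℂ) :
    f w = f 0 * complexSinc (σ * w) := by
  have hsinc : Differentiable ℂ fun z => f 0 * complexSinc (σ * z) :=
    (differentiable_complexSinc.comp (differentiable_id.const_mul _)).const_mul _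
  refine congrFun (eq_of_forall_ofReal_eq h.differentiable hsinc fun x => ?_) w
  rw [h.eq_mul_sinc_ofReal hσ hL2, ← complexSinc_ofReal, ofReal_mul]

end IsPaleyWiener

theorem stmt_6_general {σ : ℝ} (hσ : 0 < σ) {f : ℂ → ℂ} (hf : Differentiable ℂ f)
    (hL2 : ∫⁻ x : ℝ, ENNReal.ofReal (‖f x‖ ^ 2) ≤ ENNReal.ofReal (π / σ * ‖f 0‖ ^ 2))
    (hgrow : ∀ δ : ℝ, 0 < δ → ∃ C : ℝ, ∀ z : ℂ, ‖f z‖ ≤ C * Real.exp ((σ + δ) * |z.im|)) (w : ℂ) :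
    f w = f 0 * complexSinc (σ * w) := by
  have hnonneg : 0 ≤ᵐ[volume] fun x : ℝ => ‖f x‖ ^ 2 := Eventually.of_forall fun x => sq_nonneg _
  have hmeas : AEStronglyMeasurable fun x : ℝ => ‖f x‖ ^ 2 :=
    ((hf.continuous.comp continuous_ofReal).norm.pow 2).aestronglyMeasurable
  have hint : Integrable fun x : ℝ => ‖f x‖ ^ 2 :=
    ⟨hmeas, (hasFiniteIntegral_iff_ofReal hnonneg).2 (hL2.trans_lt ENNReal.ofReal_lt_top)⟩
  refine IsPaleyWiener.eq_mul_complexSinc ⟨hf, hint, hgrow⟩ hσ ?_ w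
  rw [integral_eq_lintegral_of_nonneg_ae hnonneg hmeas]
  exact ENNReal.toReal_le_of_le_ofReal (by positivity) hL2

/-- **Proposition 2.2(c)** of Avila–Last–Simon: if `f` is entire, real on `ℝ`, `f(0) = 1`,
`∫_ℝ f(x)² dx ≤ 1`, and for every `δ > 0` there is `C_δ` with
`|f(z)| ≤ C_δ exp((π + δ)|Im z|)`, then `f(z) = sin(πz)/(πz)`. -/
theorem stmt_6 (f : ℂ → ℂ) (hf : Differentiable ℂ f)
    (hreal : ∀ x : ℝ, (f x).im = 0) (hf0 : f 0 = 1)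
    (hL2 : (∫⁻ x : ℝ, ENNReal.ofReal (‖f x‖ ^ 2)) ≤ 1)
    (hgrow : ∀ δ : ℝ, 0 < δ → ∃ Cδ : ℝ, ∀ w : ℂ,
      ‖f w‖ ≤ Cδ * Real.exp ((Real.pi + δ) * |w.im|)) :
    ∀ w : ℂ, f w = if w = 0 then 1 else Complex.sin (Real.pi * w) / (Real.pi * w) := by
  intro w
  simpa [hf0, complexSinc_apply, Real.pi_ne_zero] using
    stmt_6_general Real.pi_pos hf (by simpa [hf0, Real.pi_ne_zero] using hL2) hgrow w
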